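/- Let t₁,…,t_m be pairwise distinct real numbers, and let Σ be the 2m × 2m real symmetric matrix with block entries Σ₁₁(j,l) = sc(t_l − t_j), Σ₁₂(j,l) = sc'(t_l − t_j), Σ₂₁(j,l) = −sc'(t_l − t_j), and Σ₂₂(j,l) = −sc''(t_l − t_j), where sc(x) = sin(x)/x. Then Σ is positive definite (in particular invertible). -/

import Mathlib

noncomputable def sc (x : ℝ) : ℝ := if x = 0 then 1 else Real.sin x / x

/-!
`sc` is the characteristic function of the uniform law `μ` on `[-1, 1]`, so differentiating under
the integral sign shows that `Σ` is the Gram matrix, in the real Hilbert space `L²(μ; ℂ)`, of the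
functions `x ↦ (i x)ⁿ exp (i s x)` with `s` among the `tⱼ` and `n ∈ {0, 1}`. A combination of these
that vanishes `μ`-almost everywhere is an entire function, restricted to the imaginary axis, with
uncountably many zeros, hence it is identically zero; and the functions `zⁿ exp (s z)` are linearly
independent because `zⁿ exp (s z)` lies in the generalized eigenspace of the shift `f ↦ f (· + 1)`
for the eigenvalue `exp s`. The same argument covers any number of derivatives.
-/

open Complex MeasureTheory ProbabilityTheory Set
open scoped ComplexConjugate ComplexOrder

theorem posDef_integral_inner {𝕜 E κ α : Type*} [RCLike 𝕜] [NormedAddCommGroup E]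
    [InnerProductSpace 𝕜 E] [Finite κ] [MeasurableSpace α] {μ : Measure α} {f : κ → α → E}
    (hf : ∀ i, MemLp (f i) 2 μ)
    (hli : ∀ c : κ →₀ 𝕜, c.linearCombination 𝕜 f =ᵐ[μ] 0 → c = 0) :
    (Matrix.of fun i j ↦ ∫ a, inner 𝕜 (f i a) (f j a) ∂μ).PosDef := by
  have hgram : (Matrix.of fun i j ↦ ∫ a, inner 𝕜 (f i a) (f j a) ∂μ) =
      Matrix.gram 𝕜 fun i ↦ (hf i).toLp := by
    ext i j
    refine integral_congr_ae ?_
    filter_upwards [(hf i).coeFn_toLp, (hf j).coeFn_toLp] with a hi hj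
    rw [hi, hj]
  rw [hgram]
  refine Matrix.posDef_gram_of_linearIndependent (linearIndependent_iff.2 fun c hc ↦ hli c ?_)
  have hterm : ∀ᵐ a ∂μ, ∀ i ∈ c.support, (c i • (hf i).toLp : Lp E 2 μ) a = c i • f i a := by
    refine (ae_ball_iff c.support.countable_toSet).2 fun i _ ↦ ?_
    filter_upwards [Lp.coeFn_smul (c i) (hf i).toLp, (hf i).coeFn_toLp] with a hsmul hi
    rw [hsmul, Pi.smul_apply, hi]
  rw [Finsupp.linearCombination_apply, Finsupp.sum] at hc ⊢
  filter_upwards [Lp.coeFn_finsetSum c.support fun i ↦ c i • (hf i).toLp, hterm,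
    Lp.coeFn_zero E 2 μ] with a hsum hterm hzero
  rw [hc, hzero, Finset.sum_apply, Finset.sum_congr rfl hterm] at hsum
  simpa using hsum.symm

theorem countable_preimage_zero_of_analyticOnNhd {𝕜 E : Type*} [NontriviallyNormedField 𝕜]
    [ConnectedSpace 𝕜] [SecondCountableTopology 𝕜] [NormedAddCommGroup E] [NormedSpace 𝕜 E]
    {f : 𝕜 → E} (hf : AnalyticOnNhd 𝕜 f univ) (hne : f ≠ 0) : (f ⁻¹' {0}).Countable := by
  obtain ⟨x, hx⟩ := Function.ne_iff.1 hne
  have hdisc : IsDiscrete (f ⁻¹' {0} ∩ univ) :=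
    isDiscrete_of_codiscreteWithin (hf.preimage_zero_mem_codiscrete hx)
  rw [inter_univ] at hdisc
  exact (HereditarilyLindelofSpace.isLindelof _).countable_of_isDiscrete hdisc

lemma eq_zero_of_ae_mul_I_eq_zero {F : ℂ → ℂ} (hF : Differentiable ℂ F) {μ : Measure ℝ}
    (hμ : ∀ S : Set ℝ, S.Countable → ∃ᵐ x ∂μ, x ∉ S) (hF0 : ∀ᵐ x : ℝ ∂μ, F (x * I) = 0) :
    F = 0 := by
  by_contra hne
  have hinj : Function.Injective fun x : ℝ ↦ x * I :=
    (mul_left_injective₀ I_ne_zero).comp ofReal_injective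
  have hcount : ((fun x : ℝ ↦ x * I) ⁻¹' (F ⁻¹' {0})).Countable :=
    (countable_preimage_zero_of_analyticOnNhd
      (analyticOnNhd_univ_iff_differentiable.2 hF) hne).preimage hinj
  exact hμ _ hcount (hF0.mono fun x hx hx' ↦ hx' hx)

/-- The exponential monomial `z ^ n * e ^ (s z)`. On the imaginary axis `z = x * I` it is, as a
function of `x`, the spectral representative of the variable `W⁽ⁿ⁾(s)` of a stationary process. -/
noncomputable def expMonomial (s : ℝ) (n : ℕ) (z : ℂ) : ℂ := z ^ n * exp (s * z)

lemma differentiable_expMonomial (s : ℝ) (n : ℕ) : Differentiable ℂ (expMonomial s n) := by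
  unfold expMonomial
  fun_prop

lemma linearIndependent_expMonomial_left (s : ℝ) : LinearIndependent ℂ (expMonomial s) := by
  let mulExp : Polynomial ℂ →ₗ[ℂ] ℂ → ℂ :=
    { toFun := fun p z ↦ p.eval z * exp (s * z)
      map_add' := fun p q ↦ by ext z; simp [add_mul]
      map_smul' := fun c p ↦ by ext z; simp [mul_assoc] }
  have hker : mulExp.ker = ⊥ := by
    refine LinearMap.ker_eq_bot'.2 fun p hp ↦ Polynomial.funext fun z ↦ ?_
    simpa [mulExp, exp_ne_zero] using congrFun hp z
  have hcomp : expMonomial s = mulExp ∘ Polynomial.basisMonomials ℂ := by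
    ext n z
    simp [mulExp, expMonomial]
  exact hcomp ▸ (Polynomial.basisMonomials ℂ).linearIndependent.map' mulExp hker

/-- The translation operator `f ↦ f (· + 1)`, whose generalized eigenspaces separate the frequencies
of exponential monomials. A single step suffices because `exp` is injective on real frequencies. -/
def unitShift : Module.End ℂ (ℂ → ℂ) := LinearMap.funLeft ℂ ℂ (· + 1)

lemma unitShift_sub_smul_expMonomial (s : ℝ) (n : ℕ) :
    (unitShift - exp s • 1) (expMonomial s n) =
      ∑ k ∈ Finset.range n, (exp s * n.choose k) • expMonomial s k := by
  ext z
  have hbinom : (z + 1) ^ n = (∑ k ∈ Finset.range n, z ^ k * n.choose k) + z ^ n := by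
    simp [add_pow, Finset.sum_range_succ]
  simp only [unitShift, expMonomial, LinearMap.sub_apply, LinearMap.funLeft_apply,
    LinearMap.smul_apply, Module.End.one_apply, Pi.sub_apply, Pi.smul_apply, Finset.sum_apply,
    smul_eq_mul, mul_add, mul_one, exp_add, hbinom, add_mul, Finset.sum_mul]
  rw [add_sub_assoc, add_eq_left.2 (by ring)]
  exact Finset.sum_congr rfl fun k _ ↦ by ring

lemma expMonomial_mem_maxGenEigenspace (s : ℝ) (n : ℕ) :
    expMonomial s n ∈ unitShift.maxGenEigenspace (exp s) := by
  induction n using Nat.strong_induction_on with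
  | _ n ih =>
    have hlower : (unitShift - exp s • 1) (expMonomial s n) ∈
        unitShift.maxGenEigenspace (exp s) := by
      rw [unitShift_sub_smul_expMonomial]
      exact Submodule.sum_mem _ fun k hk ↦ Submodule.smul_mem _ _ (ih k (Finset.mem_range.1 hk))
    obtain ⟨p, hp⟩ := (Module.End.mem_maxGenEigenspace ..).1 hlower
    exact (Module.End.mem_maxGenEigenspace ..).2 ⟨p + 1, by rwa [pow_succ]⟩

theorem linearIndependent_expMonomial :
    LinearIndependent ℂ fun p : ℝ × ℕ ↦ expMonomial p.1 p.2 := by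
  have hexp : Function.Injective fun s : ℝ ↦ exp s := by
    simpa [Function.comp_def] using ofReal_injective.comp Real.exp_injective
  have hspan (s : ℝ) : Submodule.span ℂ (range (expMonomial s)) ≤
      unitShift.maxGenEigenspace (exp s) :=
    Submodule.span_le.2 (range_subset_iff.2 (expMonomial_mem_maxGenEigenspace s))
  have hindep : iSupIndep fun s : ℝ ↦ Submodule.span ℂ (range (expMonomial s)) :=
    (unitShift.independent_maxGenEigenspace.comp hexp).mono hspan
  exact (linearIndependent_equiv (Equiv.sigmaEquivProd ℝ ℕ)).1 <|
    linearIndependent_iUnion_finite linearIndependent_expMonomial_left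
      fun _ _ _ hs ↦ hindep.disjoint_biSup hs

lemma norm_expMonomial_mul_I (s : ℝ) (n : ℕ) (x : ℝ) : ‖expMonomial s n (x * I)‖ = ‖x‖ ^ n := by
  have hexp : ‖exp (s * (x * I))‖ = 1 := by
    rw [← mul_assoc, ← ofReal_mul, norm_exp_ofReal_mul_I]
  simp [expMonomial, hexp]

lemma continuous_expMonomial_mul_I (s : ℝ) (n : ℕ) :
    Continuous fun x : ℝ ↦ expMonomial s n (x * I) :=
  (differentiable_expMonomial s n).continuous.comp (by fun_prop)

lemma inner_expMonomial_mul_I (s t x : ℝ) (m n : ℕ) :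
    inner ℝ (expMonomial s m (x * I)) (expMonomial t n (x * I)) =
      (-1) ^ m * (expMonomial (t - s) (m + n) (x * I)).re := by
  have hconj : conj (expMonomial s m (x * I)) = (-1) ^ m * expMonomial (-s) m (x * I) := by
    simp only [expMonomial, mul_pow, map_mul, map_pow, conj_ofReal, conj_I, neg_pow I, ← exp_conj,
      mul_neg, ofReal_neg, neg_mul]
    ring
  have hmul : expMonomial t n (x * I) * expMonomial (-s) m (x * I) =
      expMonomial (t - s) (m + n) (x * I) := by
    have hexp : exp ((t - s : ℝ) * (x * I)) = exp (t * (x * I)) * exp ((-s : ℝ) * (x * I)) := by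
      rw [← exp_add, ← add_mul, ← ofReal_add, sub_eq_add_neg]
    simp only [expMonomial, hexp]
    ring
  rw [Complex.inner, hconj, mul_left_comm, hmul]
  exact_mod_cast re_ofReal_mul ((-1) ^ m) _

lemma memLp_two_expMonomial_mul_I {μ : Measure ℝ} [IsFiniteMeasure μ] (s : ℝ) {n : ℕ}
    (hμ : MemLp id (2 * n : ℕ) μ) :
    MemLp (fun x : ℝ ↦ expMonomial s n (x * I)) 2 μ := by
  refine (memLp_two_iff_integrable_sq_norm
    (continuous_expMonomial_mul_I s n).aestronglyMeasurable).2 ?_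
  simpa only [norm_expMonomial_mul_I, ← pow_mul', id] using hμ.integrable_norm_pow'

lemma iteratedDeriv_re_charFun {μ : Measure ℝ} [IsFiniteMeasure μ] {n : ℕ} (hμ : MemLp id n μ)
    (t : ℝ) :
    iteratedDeriv n (fun x ↦ (charFun μ x).re) t =
      ∫ x, (expMonomial t n (x * I)).re ∂μ := by
  have hcomp : iteratedDeriv n (fun x ↦ (charFun μ x).re) t =
      (iteratedDeriv n (charFun μ) t).re := by
    have hfderiv :=
      reCLM.iteratedFDeriv_comp_left (contDiff_charFun hμ).contDiffAt (x := t) le_rfl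
    exact congrArg (fun L ↦ L fun _ ↦ (1 : ℝ)) hfderiv
  have hint : Integrable (fun x : ℝ ↦ expMonomial t n (x * I)) μ :=
    (integrable_norm_iff (continuous_expMonomial_mul_I t n).aestronglyMeasurable).1 <| by
      simpa only [norm_expMonomial_mul_I, id] using hμ.integrable_norm_pow'
  rw [hcomp, iteratedDeriv_charFun hμ, ← integral_const_mul]
  refine Eq.trans ?_ (integral_re hint).symm
  congr! 3 with x
  simp only [expMonomial, mul_pow]
  ring_nf

theorem charFun_cond_Icc_neg {r : ℝ} (hr : 0 < r) (x : ℝ) :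
    charFun volume[|Icc (-r) r] x = Real.sinc (r * x) := by
  have hr0 : (r : ℂ) ≠ 0 := ofReal_ne_zero.2 hr.ne'
  have hmean : charFun volume[|Icc (-r) r] x =
      (2 * r : ℂ)⁻¹ * ∫ y in (-r)..r, exp (x * y * I) := by
    have hmass : (volume (Icc (-r) r))⁻¹.toReal = (2 * r)⁻¹ := by
      rw [Real.volume_Icc, ENNReal.toReal_inv, ENNReal.toReal_ofReal (by linarith)]
      ring
    rw [charFun_apply_real, ProbabilityTheory.cond, integral_smul_measure, hmass,
      integral_Icc_eq_integral_Ioc, ← intervalIntegral.integral_of_le (by linarith), real_smul]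
    push_cast
    rfl
  rcases eq_or_ne x 0 with rfl | hx
  · have hlength : ∫ y in (-r)..r, exp ((0 : ℝ) * y * I) = 2 * r := by simp [two_mul]
    rw [hmean, hlength, inv_mul_cancel₀ (mul_ne_zero two_ne_zero hr0)]
    simp
  have hx0 : (x : ℂ) ≠ 0 := ofReal_ne_zero.2 hx
  have hsubst : ∫ y in (-r)..r, exp (x * y * I) =
      (x : ℂ)⁻¹ * (2 * (r * x) * Real.sinc (r * x)) := by
    have hscale := intervalIntegral.integral_comp_mul_left (a := -r) (b := r)
      (fun y : ℝ ↦ exp (y * I)) hx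
    simp only [ofReal_mul] at hscale
    rw [hscale, mul_neg, mul_comm x r, integral_exp_mul_I_eq_sinc, real_smul]
    push_cast
    rfl
  rw [hmean, hsubst]
  field_simp

/-- The covariance matrix of the derivatives `W⁽ⁿ ⁱ⁾(s i)` of a stationary process `W` with
`Cov(W(u), W(v)) = k (v - u)`: differentiating `n i` times in `u` produces the sign `(-1) ^ n i`. -/
noncomputable def jetCovariance {κ : Type*} (k : ℝ → ℝ) (s : κ → ℝ) (n : κ → ℕ) : Matrix κ κ ℝ :=
  Matrix.of fun i j ↦ (-1) ^ n i * iteratedDeriv (n i + n j) k (s j - s i)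

theorem posDef_jetCovariance_re_charFun {κ : Type*} [Finite κ] {s : κ → ℝ} {n : κ → ℕ}
    (hsn : Function.Injective fun i ↦ (s i, n i)) {μ : Measure ℝ} [IsFiniteMeasure μ]
    (hμ : ∀ i, MemLp id (2 * n i : ℕ) μ) (hμc : ∀ S : Set ℝ, S.Countable → ∃ᵐ x ∂μ, x ∉ S) :
    (jetCovariance (fun x ↦ (charFun μ x).re) s n).PosDef := by
  have hgram : jetCovariance (fun x ↦ (charFun μ x).re) s n = Matrix.of fun i j ↦
      ∫ x : ℝ, inner ℝ (expMonomial (s i) (n i) (x * I)) (expMonomial (s j) (n j) (x * I)) ∂μ := by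
    ext i j
    have hμij : MemLp id (n i + n j : ℕ) μ := by
      rcases le_total (n i) (n j) with h | h
      · exact (hμ j).mono_exponent (by exact_mod_cast (by lia))
      · exact (hμ i).mono_exponent (by exact_mod_cast (by lia))
    simp only [jetCovariance, Matrix.of_apply, inner_expMonomial_mul_I, integral_const_mul,
      iteratedDeriv_re_charFun hμij]
  rw [hgram]
  refine posDef_integral_inner (fun i ↦ memLp_two_expMonomial_mul_I (s i) (hμ i)) fun c hc ↦ ?_
  have hli : LinearIndependent ℝ fun i ↦ expMonomial (s i) (n i) :=
    (linearIndependent_expMonomial.comp _ hsn).restrict_scalars (by simpa using ofReal_injective)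
  have hdiff : Differentiable ℂ (c.linearCombination ℝ fun i ↦ expMonomial (s i) (n i)) := by
    rw [Finsupp.linearCombination_apply]
    exact Differentiable.sum fun i _ ↦ (differentiable_expMonomial _ _).const_smul (c i)
  have hzero : ∀ᵐ x : ℝ ∂μ,
      c.linearCombination ℝ (fun i ↦ expMonomial (s i) (n i)) (x * I) = 0 := by
    filter_upwards [hc] with x hx
    simpa [Finsupp.linearCombination_apply, Finsupp.sum] using hx
  exact linearIndependent_iff.1 hli c (eq_zero_of_ae_mul_I_eq_zero hdiff hμc hzero)

theorem stmt9_general {κ : Type*} [Finite κ] {s : κ → ℝ} {n : κ → ℕ}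
    (hsn : Function.Injective fun i ↦ (s i, n i)) : (jetCovariance sc s n).PosDef := by
  have hsc : sc = fun x ↦ (charFun volume[|Icc (-1 : ℝ) 1] x).re := by
    ext x
    rw [charFun_cond_Icc_neg one_pos, one_mul, ofReal_re]
    rfl
  have : IsProbabilityMeasure (volume[|Icc (-1 : ℝ) 1]) :=
    cond_isProbabilityMeasure_of_finite (by simp) (by simp)
  rw [hsc]
  refine posDef_jetCovariance_re_charFun hsn (fun i ↦ ?_) fun S hS ↦ ?_
  · exact .of_bound measurable_id.aestronglyMeasurable 1 <|
      (ae_cond_mem measurableSet_Icc).mono fun x hx ↦ abs_le.2 hx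
  · have hae : ∀ᵐ x ∂volume[|Icc (-1 : ℝ) 1], x ∉ S :=
      cond_absolutelyContinuous.ae_le (hS.ae_notMem volume)
    exact hae.frequently

theorem stmt9 (m : ℕ) (t : Fin m → ℝ) (ht : Function.Injective t) :
    (Matrix.of (fun i j : Fin m ⊕ Fin m =>
      match i, j with
      | Sum.inl j', Sum.inl l => sc (t l - t j')
      | Sum.inl j', Sum.inr l => deriv sc (t l - t j')
      | Sum.inr j', Sum.inl l => - deriv sc (t l - t j')
      | Sum.inr j', Sum.inr l => - deriv (deriv sc) (t l - t j'))).PosDef := by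
  convert stmt9_general (s := Sum.elim t t) (n := Sum.elim 0 1) ?_
  · ext (i | i) (j | j) <;> simp [jetCovariance, iteratedDeriv_succ]
  · rintro (i | i) (j | j) h <;> simp_all [ht.eq_iff]
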